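/- For a unital qubit channel N with Pauli-diagonal coefficients (d¹,d²,d³) in the small tetrahedron T_μ (containing the vertex E_μ), the 'no measurement' protocol with single correction C = A_{σ_μ} achieves average fidelity 1/2 + (|d¹| + |d²| + |d³|)/6, and this is optimal among all ex-ante/ex-post protocols; if instead (d¹,d²,d³) lies in the octahedron O (i.e., |d¹|+|d²|+|d³| ≤ 1), the discriminate-and-reprepare protocol is optimal with average fidelity 2/3. -/

import Mathlib

open Matrix ComplexOrder

/-- `id_n ⊗ Φ`. -/
noncomputable def applyBlocks {d : ℕ} (n : ℕ)
    (Φ : Matrix (Fin d) (Fin d) ℂ →ₗ[ℂ] Matrix (Fin d) (Fin d) ℂ)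
    (M : Matrix (Fin n × Fin d) (Fin n × Fin d) ℂ) :
    Matrix (Fin n × Fin d) (Fin n × Fin d) ℂ :=
  Matrix.of fun p q => Φ (Matrix.of fun i j => M (p.1, i) (q.1, j)) p.2 q.2

/-- Complete positivity. -/
def IsCP {d : ℕ}
    (Φ : Matrix (Fin d) (Fin d) ℂ →ₗ[ℂ] Matrix (Fin d) (Fin d) ℂ) : Prop :=
  ∀ (n : ℕ) (M : Matrix (Fin n × Fin d) (Fin n × Fin d) ℂ),
    M.PosSemidef → (applyBlocks n Φ M).PosSemidef

/-- Trace preservation. -/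
def IsTP {d : ℕ}
    (Φ : Matrix (Fin d) (Fin d) ℂ →ₗ[ℂ] Matrix (Fin d) (Fin d) ℂ) : Prop :=
  ∀ X, (Φ X).trace = X.trace

/-- An ex-ante/ex-post protocol: a CP instrument `{I_ω}` and TPCP maps `C_ω`. -/
def IsProtocol {d m : ℕ}
    (I C : Fin m → (Matrix (Fin d) (Fin d) ℂ →ₗ[ℂ] Matrix (Fin d) (Fin d) ℂ)) : Prop :=
  (∀ ω, IsCP (I ω)) ∧ (∀ X, ∑ ω, ((I ω) X).trace = X.trace) ∧
    (∀ ω, IsCP (C ω) ∧ IsTP (C ω))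

/-- Average fidelity `F̄ = (2 + Σ_ω Tr_HS (C_ω ∘ N ∘ I_ω))/6` for a qubit. -/
noncomputable def avgFid
    (N : Matrix (Fin 2) (Fin 2) ℂ →ₗ[ℂ] Matrix (Fin 2) (Fin 2) ℂ) {m : ℕ}
    (I C : Fin m → (Matrix (Fin 2) (Fin 2) ℂ →ₗ[ℂ] Matrix (Fin 2) (Fin 2) ℂ)) : ℝ :=
  ((2 : ℝ) + ∑ ω, (LinearMap.trace ℂ (Matrix (Fin 2) (Fin 2) ℂ)
      ((C ω) ∘ₗ N ∘ₗ (I ω))).re) / 6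

/-- The Pauli matrices `σ_0 = I, σ_1, σ_2, σ_3`. -/
noncomputable def pauli : Fin 4 → Matrix (Fin 2) (Fin 2) ℂ :=
  ![1, !![0, 1; 1, 0], !![0, -Complex.I; Complex.I, 0], !![1, 0; 0, -1]]

/-- The unitary conjugation superoperator `A_U(ρ) = U ρ U†`. -/
noncomputable def conjBy {d : ℕ} (U : Matrix (Fin d) (Fin d) ℂ) :
    Matrix (Fin d) (Fin d) ℂ →ₗ[ℂ] Matrix (Fin d) (Fin d) ℂ :=
  (LinearMap.mulLeft ℂ U).comp (LinearMap.mulRight ℂ Uᴴ)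

/-- The Pauli channel `N = Σ_μ α^μ A_{σ_μ}`. -/
noncomputable def pauliChannel (α : Fin 4 → ℝ) :
    Matrix (Fin 2) (Fin 2) ℂ →ₗ[ℂ] Matrix (Fin 2) (Fin 2) ℂ :=
  ∑ μ, ((α μ : ℂ)) • conjBy (pauli μ)

/-- The Pauli-diagonal coordinates `(d¹,d²,d³)` of the Pauli channel. -/
noncomputable def dCoord (α : Fin 4 → ℝ) : Fin 3 → ℝ :=
  ![α 0 + α 1 - α 2 - α 3, α 0 - α 1 + α 2 - α 3, α 0 - α 1 - α 2 + α 3]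

/-- The sign vectors of the vertices `E_μ`; `d ∈ T_μ` iff `⟨s_μ, d⟩ ≥ 1`. -/
noncomputable def signE : Fin 4 → (Fin 3 → ℝ) :=
  ![![1,1,1], ![1,-1,-1], ![-1,1,-1], ![-1,-1,1]]

/-- The spectral projections of `σ_3`. -/
noncomputable def Pk : Fin 2 → Matrix (Fin 2) (Fin 2) ℂ :=
  ![!![1, 0; 0, 0], !![0, 0; 0, 1]]

/-- Discriminate-and-reprepare protocol. -/
noncomputable def drInstr (ω : Fin 2) :
    Matrix (Fin 2) (Fin 2) ℂ →ₗ[ℂ] Matrix (Fin 2) (Fin 2) ℂ :=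
  (LinearMap.mulLeft ℂ (Pk ω)).comp (LinearMap.mulRight ℂ (Pk ω))

noncomputable def drCorr (ω : Fin 2) :
    Matrix (Fin 2) (Fin 2) ℂ →ₗ[ℂ] Matrix (Fin 2) (Fin 2) ℂ :=
  (Matrix.traceLinearMap (Fin 2) ℂ ℂ).smulRight (Pk ω)

/-! The average fidelity is affine in the noise, so on a Pauli channel with weights `α` it is
determined by the numbers `t μ = ∑ ω, Tr_HS (C ω ∘ A_{σ_μ} ∘ I ω)`. Two linear facts about these
suffice. First, `t μ ≥ 0`: the trace of a completely positive map is an expectation in its Choi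
matrix. Second, `t μ + t ν ≤ 4` for `μ ≠ ν`: the equal mixture of two orthogonal qubit unitaries is,
up to a unitary rotation, a dephasing channel, hence a measure-and-prepare channel
`X ↦ ∑ j, Tr(E j * X) ρ j`, and against such noise no protocol has trace above the dimension.

Consequently `∑ μ, α μ * t μ` is at most `4 * α μ` when some `α μ ≥ 1 / 2`, which is the corner
`T_μ`, and at most `2` when every `α μ ≤ 1 / 2`, which is the octahedron `O`; the correction
`A_{σ_μ}` and discriminate-and-reprepare attain these two values. -/

/-- Linear maps on `d × d` matrices. -/
abbrev Superoperator (d : ℕ) : Type :=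
  Matrix (Fin d) (Fin d) ℂ →ₗ[ℂ] Matrix (Fin d) (Fin d) ℂ

section PosSemidef

variable {n 𝕜 : Type*} [Fintype n] [RCLike 𝕜]

open scoped MatrixOrder Matrix.Norms.L2Operator in
lemma trace_mul_nonneg_of_posSemidef {A B : Matrix n n 𝕜} (hA : A.PosSemidef)
    (hB : B.PosSemidef) : 0 ≤ (A * B).trace := by
  classical
  obtain ⟨C, rfl⟩ := CStarAlgebra.nonneg_iff_eq_star_mul_self.mp hA.nonneg
  rw [star_eq_conjTranspose, trace_mul_comm, ← mul_assoc, trace_mul_comm, ← mul_assoc]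
  exact (hB.mul_mul_conjTranspose_same C).trace_nonneg

lemma posSemidef_trace_smul_one_sub [DecidableEq n] {A : Matrix n n 𝕜} (hA : A.PosSemidef) :
    (A.trace • 1 - A).PosSemidef := by
  set U := hA.isHermitian.eigenvectorUnitary
  have hdiag : A.trace • 1 - A = (U : Matrix n n 𝕜) *
      diagonal (fun i => A.trace - (hA.isHermitian.eigenvalues i : 𝕜)) *
        (U : Matrix n n 𝕜)ᴴ := by
    rw [← diagonal_sub, mul_sub, sub_mul, ← smul_one_eq_diagonal, mul_smul_comm, smul_mul_assoc,
      mul_one, ← star_eq_conjTranspose, Unitary.mul_star_self_of_mem U.2]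
    congr 1
    exact hA.isHermitian.spectral_theorem
  rw [hdiag]
  refine (PosSemidef.diagonal fun i => ?_).mul_mul_conjTranspose_same _
  rw [Pi.zero_apply, sub_nonneg, hA.isHermitian.trace_eq_sum_eigenvalues]
  exact_mod_cast Finset.single_le_sum (fun j _ => hA.eigenvalues_nonneg j) (Finset.mem_univ i)

open scoped MatrixOrder in
lemma posSemidef_of_isStarProjection {P : Matrix n n 𝕜} (hP : IsStarProjection P) :
    P.PosSemidef :=
  hP.nonneg.posSemidef

end PosSemidef

section Superoperators

variable {d : ℕ}

lemma conjBy_apply (U X : Matrix (Fin d) (Fin d) ℂ) : conjBy U X = U * X * Uᴴ :=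
  (mul_assoc U X Uᴴ).symm

lemma conjBy_mul (U V : Matrix (Fin d) (Fin d) ℂ) : conjBy (U * V) = conjBy U ∘ₗ conjBy V := by
  ext1 X
  simp only [conjBy_apply, LinearMap.comp_apply, conjTranspose_mul, mul_assoc]

lemma conjBy_smul (c : ℂ) (U : Matrix (Fin d) (Fin d) ℂ) :
    conjBy (c • U) = (c * star c) • conjBy U := by
  ext1 X
  simp only [conjBy_apply, LinearMap.smul_apply, conjTranspose_smul, smul_mul_assoc,
    mul_smul_comm, smul_smul, mul_comm c]

open scoped Kronecker in
lemma applyBlocks_conjBy (n : ℕ) (U : Matrix (Fin d) (Fin d) ℂ)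
    (M : Matrix (Fin n × Fin d) (Fin n × Fin d) ℂ) :
    applyBlocks n (conjBy U) M =
      ((1 : Matrix (Fin n) (Fin n) ℂ) ⊗ₖ U) * M * ((1 : Matrix (Fin n) (Fin n) ℂ) ⊗ₖ U)ᴴ := by
  ext p q
  simp [applyBlocks, conjBy_apply, mul_apply, one_apply, Fintype.sum_prod_type, apply_ite]

lemma isCP_conjBy (U : Matrix (Fin d) (Fin d) ℂ) : IsCP (conjBy U) := by
  intro n M hM
  rw [applyBlocks_conjBy]
  exact hM.mul_mul_conjTranspose_same _

lemma isTP_conjBy {U : Matrix (Fin d) (Fin d) ℂ} (hU : U ∈ unitaryGroup (Fin d) ℂ) :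
    IsTP (conjBy U) := by
  intro X
  rw [conjBy_apply, trace_mul_cycle, ← star_eq_conjTranspose, hU.1, one_mul]

lemma IsCP.comp {Φ Ψ : Superoperator d} (hΦ : IsCP Φ) (hΨ : IsCP Ψ) : IsCP (Φ ∘ₗ Ψ) :=
  fun n M hM => hΦ n _ (hΨ n M hM)

lemma IsCP.posSemidef_apply {Φ : Superoperator d} (hΦ : IsCP Φ)
    {X : Matrix (Fin d) (Fin d) ℂ} (hX : X.PosSemidef) : (Φ X).PosSemidef :=
  (hΦ 1 _ (hX.submatrix Prod.snd)).submatrix (fun i => ((0 : Fin 1), i))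

lemma trace_superoperator_eq_sum (Φ : Superoperator d) :
    LinearMap.trace ℂ _ Φ = ∑ i, ∑ j, Φ (single i j 1) i j := by
  rw [LinearMap.trace_eq_matrix_trace ℂ (stdBasis ℂ (Fin d) (Fin d)), Matrix.trace,
    Fintype.sum_prod_type]
  simp only [diag_apply, LinearMap.toMatrix_apply, stdBasis_eq_single]
  rfl

lemma trace_conjBy (U : Matrix (Fin d) (Fin d) ℂ) :
    LinearMap.trace ℂ _ (conjBy U) = U.trace * star U.trace := by
  rw [trace_superoperator_eq_sum]
  simp [conjBy_apply, mul_apply, single_apply, Matrix.trace, Finset.sum_mul_sum, ite_and]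

/-- The unnormalised maximally entangled vector `∑ i, e_i ⊗ e_i`. Its expectation in a Choi matrix
is the Hilbert–Schmidt trace of the superoperator. -/
def maxEntangled (d : ℕ) : Fin d × Fin d → ℂ :=
  fun p => if p.1 = p.2 then 1 else 0

lemma trace_eq_dotProduct_applyBlocks_maxEntangled (Φ : Superoperator d) :
    LinearMap.trace ℂ _ Φ =
      star (maxEntangled d) ⬝ᵥ
        (applyBlocks d Φ (vecMulVec (maxEntangled d) (star (maxEntangled d))) *ᵥ
          maxEntangled d) := by
  have hblock : ∀ i j : Fin d, (of fun a b =>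
      vecMulVec (maxEntangled d) (star (maxEntangled d)) (i, a) (j, b)) = single i j 1 := by
    intro i j
    ext a b
    by_cases hi : i = a <;> by_cases hj : j = b <;>
      simp [maxEntangled, vecMulVec_apply, hi, hj]
  rw [trace_superoperator_eq_sum]
  simp [maxEntangled, dotProduct, mulVec, applyBlocks, hblock, Fintype.sum_prod_type]

lemma IsCP.trace_nonneg {Φ : Superoperator d} (hΦ : IsCP Φ) : 0 ≤ LinearMap.trace ℂ _ Φ := by
  rw [trace_eq_dotProduct_applyBlocks_maxEntangled]
  exact (hΦ d _ (posSemidef_vecMulVec_self_star _)).dotProduct_mulVec_nonneg _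

end Superoperators

section MeasurePrepare

variable {d : ℕ}

/-- The superoperator `X ↦ Tr(E X) ρ`: on measurement outcome `E`, prepare `ρ`. -/
noncomputable def measurePrepare (E ρ : Matrix (Fin d) (Fin d) ℂ) : Superoperator d :=
  (traceLinearMap (Fin d) ℂ ℂ ∘ₗ LinearMap.mulLeft ℂ E).smulRight ρ

lemma measurePrepare_apply (E ρ X : Matrix (Fin d) (Fin d) ℂ) :
    measurePrepare E ρ X = (E * X).trace • ρ :=
  rfl

lemma comp_measurePrepare (Φ : Superoperator d) (E ρ : Matrix (Fin d) (Fin d) ℂ) :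
    Φ ∘ₗ measurePrepare E ρ = measurePrepare E (Φ ρ) := by
  ext1 X
  simp only [LinearMap.comp_apply, measurePrepare_apply, map_smul]

lemma trace_comp_measurePrepare_comp (Φ Ψ : Superoperator d) (E ρ : Matrix (Fin d) (Fin d) ℂ) :
    LinearMap.trace ℂ _ (Φ ∘ₗ measurePrepare E ρ ∘ₗ Ψ) = (E * Ψ (Φ ρ)).trace := by
  rw [← LinearMap.comp_assoc, comp_measurePrepare]
  exact LinearMap.trace_smulRight ((traceLinearMap (Fin d) ℂ ℂ ∘ₗ LinearMap.mulLeft ℂ E) ∘ₗ Ψ) (Φ ρ)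

/-- A quantum-classical-quantum channel: measure a POVM `E`, then prepare the state `ρ j` on
outcome `j`. -/
def IsQCQ (N : Superoperator d) : Prop :=
  ∃ (k : ℕ) (E ρ : Fin k → Matrix (Fin d) (Fin d) ℂ),
    (∀ j, (E j).PosSemidef) ∧ ∑ j, E j = 1 ∧
    (∀ j, (ρ j).PosSemidef ∧ (ρ j).trace = 1) ∧
    N = ∑ j, measurePrepare (E j) (ρ j)

lemma IsQCQ.comp_left {N Φ : Superoperator d} (hN : IsQCQ N) (hΦ : IsCP Φ) (hΦ' : IsTP Φ) :
    IsQCQ (Φ ∘ₗ N) := by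
  obtain ⟨k, E, ρ, hE, hE1, hρ, rfl⟩ := hN
  refine ⟨k, E, fun j => Φ (ρ j), hE, hE1,
    fun j => ⟨hΦ.posSemidef_apply (hρ j).1, (hΦ' _).trans (hρ j).2⟩, ?_⟩
  ext1 X
  simp only [LinearMap.comp_apply, LinearMap.sum_apply, map_sum, measurePrepare_apply, map_smul]

end MeasurePrepare

section Protocols

variable {d m : ℕ} {I C : Fin m → Superoperator d} {N : Superoperator d}

/-- `N ↦ ∑ ω, Tr_HS (C ω ∘ N ∘ I ω)`, the part of the average fidelity that is linear in the
noise. -/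
noncomputable def protocolTrace (I C : Fin m → Superoperator d) : Superoperator d →ₗ[ℂ] ℂ :=
  ∑ ω, LinearMap.trace ℂ _ ∘ₗ (C ω).compRight ℂ ∘ₗ (I ω).lcomp ℂ _

lemma protocolTrace_apply (I C : Fin m → Superoperator d) (N : Superoperator d) :
    protocolTrace I C N = ∑ ω, LinearMap.trace ℂ _ (C ω ∘ₗ N ∘ₗ I ω) := by
  simp only [protocolTrace, LinearMap.sum_apply]
  rfl

lemma IsProtocol.protocolTrace_nonneg (h : IsProtocol I C) (hN : IsCP N) :
    0 ≤ protocolTrace I C N := by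
  rw [protocolTrace_apply]
  exact Finset.sum_nonneg fun ω _ => ((h.2.2 ω).1.comp (hN.comp (h.1 ω))).trace_nonneg

-- A state satisfies `C ω ρ ≤ 1`, so each outcome contributes at most `Tr(E j * I ω 1)`; the effects
-- `E j` then sum to `1` and the instrument preserves the trace of `1`.
lemma IsProtocol.protocolTrace_le_of_isQCQ (h : IsProtocol I C) (hN : IsQCQ N) :
    protocolTrace I C N ≤ d := by
  obtain ⟨k, E, ρ, hE, hE1, hρ, rfl⟩ := hN
  have hle : ∀ ω j, (E j * I ω (C ω (ρ j))).trace ≤ (E j * I ω 1).trace := by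
    intro ω j
    have hstate := posSemidef_trace_smul_one_sub ((h.2.2 ω).1.posSemidef_apply (hρ j).1)
    rw [(h.2.2 ω).2, (hρ j).2, one_smul] at hstate
    have hgap := trace_mul_nonneg_of_posSemidef (hE j) ((h.1 ω).posSemidef_apply hstate)
    rwa [map_sub, mul_sub, trace_sub, sub_nonneg] at hgap
  calc protocolTrace I C (∑ j, measurePrepare (E j) (ρ j))
      = ∑ ω, ∑ j, (E j * I ω (C ω (ρ j))).trace := by
        simp only [map_sum, protocolTrace_apply, trace_comp_measurePrepare_comp]
        exact Finset.sum_comm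
    _ ≤ ∑ ω, ∑ j, (E j * I ω 1).trace :=
        Finset.sum_le_sum fun ω _ => Finset.sum_le_sum fun j _ => hle ω j
    _ = ∑ ω, (I ω 1).trace := by
        simp only [← trace_sum, ← Finset.sum_mul, hE1, one_mul]
    _ = d := by rw [h.2.1, trace_one, Fintype.card_fin]

end Protocols

section Dephasing

lemma id_add_conjBy_two_mul_sub_one {d : ℕ} {P : Matrix (Fin d) (Fin d) ℂ} (hP : P.IsHermitian) :
    LinearMap.id + conjBy (2 * P - 1) = (2 : ℂ) • (conjBy P + conjBy (1 - P)) := by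
  ext1 X
  simp only [LinearMap.add_apply, LinearMap.smul_apply, LinearMap.id_apply, conjBy_apply,
    conjTranspose_sub, conjTranspose_mul, conjTranspose_one, conjTranspose_ofNat, hP.eq,
    ofNat_smul_eq_nsmul]
  noncomm_ring

section CommRing

variable {R : Type*} [CommRing R] {A : Matrix (Fin 2) (Fin 2) R}

lemma mul_self_eq_trace_smul_sub_det_smul (A : Matrix (Fin 2) (Fin 2) R) :
    A * A = A.trace • A - A.det • 1 := by
  nontriviality R
  have h := A.aeval_self_charpoly
  simp only [charpoly_fin_two, map_add, map_sub, map_mul, map_pow, Polynomial.aeval_X,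
    Polynomial.aeval_C, Algebra.algebraMap_eq_smul_one, smul_one_mul] at h
  rwa [sq, sub_add, sub_eq_zero] at h

lemma det_eq_zero_of_isIdempotentElem (hA : IsIdempotentElem A) (htr : A.trace = 1) :
    A.det = 0 := by
  have h := mul_self_eq_trace_smul_sub_det_smul A
  rw [hA.eq, htr, one_smul, eq_comm, sub_eq_self] at h
  simpa using congrFun (congrFun h 0) 0

lemma mul_mul_self_eq_trace_smul_of_det_eq_zero (hA : A.det = 0) (X : Matrix (Fin 2) (Fin 2) R) :
    A * X * A = (A * X).trace • A := by
  rw [det_fin_two] at hA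
  ext i j
  fin_cases i <;> fin_cases j <;>
    simp [mul_apply, trace_fin_two, Fin.sum_univ_two] <;> grind

end CommRing

lemma conjBy_eq_measurePrepare {P : Matrix (Fin 2) (Fin 2) ℂ} (hP : IsStarProjection P)
    (htr : P.trace = 1) : conjBy P = measurePrepare P P := by
  ext1 X
  rw [conjBy_apply, measurePrepare_apply, ← star_eq_conjTranspose, hP.isSelfAdjoint.star_eq,
    mul_mul_self_eq_trace_smul_of_det_eq_zero
      (det_eq_zero_of_isIdempotentElem hP.isIdempotentElem htr)]

lemma isStarProjection_half_smul_one_add {n : Type*} [Fintype n] [DecidableEq n]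
    {S : Matrix n n ℂ} (hS : IsSelfAdjoint S) (hSS : S * S = 1) :
    IsStarProjection ((1 / 2 : ℂ) • (1 + S)) where
  isIdempotentElem := by
    have hsq : (1 + S) * (1 + S) = (2 : ℂ) • (1 + S) := by
      rw [add_mul, one_mul, mul_add, mul_one, hSS, add_comm S, two_smul]
    rw [IsIdempotentElem, smul_mul_smul_comm, hsq, smul_smul]
    norm_num
  isSelfAdjoint := IsSelfAdjoint.smul (by simp [isSelfAdjoint_iff]) ((IsSelfAdjoint.one _).add hS)

lemma isQCQ_half_smul_id_add_conjBy {S : Matrix (Fin 2) (Fin 2) ℂ} (hS : IsSelfAdjoint S)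
    (hSS : S * S = 1) (htr : S.trace = 0) :
    IsQCQ ((1 / 2 : ℂ) • (LinearMap.id + conjBy S)) := by
  set P : Matrix (Fin 2) (Fin 2) ℂ := (1 / 2 : ℂ) • (1 + S) with hP_def
  have hP : IsStarProjection P := isStarProjection_half_smul_one_add hS hSS
  have hS_eq : S = 2 * P - 1 := by
    rw [hP_def, two_mul, ← add_smul]
    norm_num
  have hPtr : P.trace = 1 := by
    rw [hP_def, trace_smul, trace_add, htr, trace_one, Fintype.card_fin]
    norm_num
  have hQtr : (1 - P).trace = 1 := by
    rw [trace_sub, hPtr, trace_one, Fintype.card_fin]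
    norm_num
  have hpos : ∀ j, (![P, 1 - P] j).PosSemidef :=
    Fin.forall_fin_two.mpr
      ⟨posSemidef_of_isStarProjection hP, posSemidef_of_isStarProjection hP.one_sub⟩
  have htrace : ∀ j, (![P, 1 - P] j).trace = 1 := Fin.forall_fin_two.mpr ⟨hPtr, hQtr⟩
  refine ⟨2, ![P, 1 - P], ![P, 1 - P], hpos, ?_, fun j => ⟨hpos j, htrace j⟩, ?_⟩
  · rw [Fin.sum_univ_two]
    exact add_sub_cancel P 1
  · rw [Fin.sum_univ_two, hS_eq, id_add_conjBy_two_mul_sub_one hP.isSelfAdjoint,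
      conjBy_eq_measurePrepare hP hPtr, conjBy_eq_measurePrepare hP.one_sub hQtr, smul_smul]
    norm_num

lemma exists_eq_smul_isSelfAdjoint_of_trace_eq_zero {W : Matrix (Fin 2) (Fin 2) ℂ}
    (hW : W ∈ unitaryGroup (Fin 2) ℂ) (htr : W.trace = 0) :
    ∃ (c : ℂ) (S : Matrix (Fin 2) (Fin 2) ℂ),
      c ∈ unitary ℂ ∧ IsSelfAdjoint S ∧ S * S = 1 ∧ W = c • S := by
  obtain ⟨c, hc⟩ := IsAlgClosed.exists_eq_mul_self (-W.det)
  have hnorm : ‖c‖ = 1 := by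
    have hdet : ‖W.det‖ = 1 := CStarRing.norm_of_mem_unitary (det_of_mem_unitary hW)
    rw [← norm_neg, hc, norm_mul] at hdet
    nlinarith [norm_nonneg c]
  have hc_unit : star c * c = 1 := by
    rw [← starRingEnd_apply, Complex.conj_mul', hnorm]
    norm_num
  have hc_mem : c ∈ unitary ℂ := ⟨hc_unit, (mul_comm _ _).trans hc_unit⟩
  have hWW : W * W = (c * c) • 1 := by
    rw [mul_self_eq_trace_smul_sub_det_smul, htr, zero_smul, zero_sub, ← neg_smul, hc]
  have hS : star (star c • W) * (star c • W) = 1 := by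
    rw [star_smul, star_star, smul_mul_smul_comm, hW.1, hc_mem.2, one_smul]
  have hSS : (star c • W) * (star c • W) = 1 := by
    rw [smul_mul_smul_comm, hWW, smul_smul, mul_mul_mul_comm, hc_unit, one_mul, one_smul]
  refine ⟨c, star c • W, hc_mem, left_inv_eq_right_inv hS hSS, hSS, ?_⟩
  rw [smul_smul, hc_mem.2, one_smul]

lemma isQCQ_half_smul_conjBy_add_conjBy {U V : Matrix (Fin 2) (Fin 2) ℂ}
    (hU : U ∈ unitaryGroup (Fin 2) ℂ) (hV : V ∈ unitaryGroup (Fin 2) ℂ)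
    (hUV : (Uᴴ * V).trace = 0) : IsQCQ ((1 / 2 : ℂ) • (conjBy U + conjBy V)) := by
  obtain ⟨c, S, hc, hS, hSS, hW⟩ :=
    exists_eq_smul_isSelfAdjoint_of_trace_eq_zero (mul_mem (Unitary.star_mem hU) hV) hUV
  have hS_trace : S.trace = 0 := by
    rw [← star_eq_conjTranspose, hW, trace_smul, smul_eq_zero] at hUV
    exact hUV.resolve_left (left_ne_zero_of_mul_eq_one hc.2)
  have hV_eq : conjBy V = conjBy U ∘ₗ conjBy S := by
    rw [← one_smul ℂ (conjBy S), ← hc.2, ← conjBy_smul, ← hW, ← conjBy_mul, ← mul_assoc,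
      hU.2, one_mul]
  have h := (isQCQ_half_smul_id_add_conjBy hS hSS hS_trace).comp_left (isCP_conjBy U)
    (isTP_conjBy hU)
  rwa [LinearMap.comp_smul, LinearMap.comp_add, LinearMap.comp_id, ← hV_eq] at h

lemma IsProtocol.protocolTrace_conjBy_add_le {m : ℕ} {I C : Fin m → Superoperator 2}
    (h : IsProtocol I C) {U V : Matrix (Fin 2) (Fin 2) ℂ} (hU : U ∈ unitaryGroup (Fin 2) ℂ)
    (hV : V ∈ unitaryGroup (Fin 2) ℂ) (hUV : (Uᴴ * V).trace = 0) :
    protocolTrace I C (conjBy U) + protocolTrace I C (conjBy V) ≤ 4 := by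
  have hle := h.protocolTrace_le_of_isQCQ (isQCQ_half_smul_conjBy_add_conjBy hU hV hUV)
  rw [map_smul, map_add, smul_eq_mul] at hle
  calc protocolTrace I C (conjBy U) + protocolTrace I C (conjBy V)
      = 2 * (1 / 2 * (protocolTrace I C (conjBy U) + protocolTrace I C (conjBy V))) := by ring
    _ ≤ 2 * (2 : ℕ) := mul_le_mul_of_nonneg_left hle zero_le_two
    _ = 4 := by norm_num

end Dephasing

section WeightedSums

variable {ι : Type*} [Fintype ι] {w t : ι → ℝ} {b : ℝ}

lemma sum_mul_le_of_add_le (hw : w ∈ stdSimplex ℝ ι) {i : ι}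
    (ht : ∀ j ≠ i, t i + t j ≤ b) :
    ∑ j, w j * t j ≤ w i * t i + (1 - w i) * (b - t i) := by
  classical
  have hrest : ∑ j ∈ Finset.univ.erase i, w j = 1 - w i := by
    rw [eq_sub_iff_add_eq', Finset.add_sum_erase _ _ (Finset.mem_univ i), hw.2]
  rw [← Finset.add_sum_erase _ _ (Finset.mem_univ i), ← hrest, Finset.sum_mul]
  gcongr with j hj
  · exact hw.1 j
  · linarith [ht j (Finset.ne_of_mem_erase hj)]

lemma sum_mul_le_of_half_le (hw : w ∈ stdSimplex ℝ ι) {i : ι} (hi : 1 / 2 ≤ w i)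
    (hti : t i ≤ b) (ht : ∀ j ≠ i, t i + t j ≤ b) :
    ∑ j, w j * t j ≤ b * w i := by
  have hgap : 0 ≤ (2 * w i - 1) * (b - t i) := mul_nonneg (by linarith) (by linarith)
  linarith [sum_mul_le_of_add_le hw ht]

lemma sum_mul_le_of_le_half (hw : w ∈ stdSimplex ℝ ι) (hw_half : ∀ i, w i ≤ 1 / 2)
    (ht : ∀ i j, j ≠ i → t i + t j ≤ b) : ∑ j, w j * t j ≤ b / 2 := by
  by_cases hlarge : ∃ i, b / 2 ≤ t i
  · obtain ⟨i, hi⟩ := hlarge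
    have hgap : 0 ≤ (1 / 2 - w i) * (2 * t i - b) :=
      mul_nonneg (by linarith [hw_half i]) (by linarith)
    linarith [sum_mul_le_of_add_le hw (ht i)]
  · push Not at hlarge
    calc ∑ j, w j * t j ≤ ∑ j, w j * (b / 2) :=
          Finset.sum_le_sum fun j _ => mul_le_mul_of_nonneg_left (hlarge j).le (hw.1 j)
      _ = b / 2 := by rw [← Finset.sum_mul, hw.2, one_mul]

end WeightedSums

section PauliCoordinates

lemma abs_signE (μ : Fin 4) (i : Fin 3) : |signE μ i| = 1 := by
  fin_cases μ <;> fin_cases i <;> simp [signE]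

lemma sum_signE_mul_signE (μ ν : Fin 4) :
    ∑ i, signE μ i * signE ν i = if μ = ν then 3 else -1 := by
  fin_cases μ <;> fin_cases ν <;> simp [signE, Fin.sum_univ_three] <;> norm_num

lemma dCoord_eq_sum (α : Fin 4 → ℝ) (i : Fin 3) : dCoord α i = ∑ ν, α ν * signE ν i := by
  fin_cases i <;> simp [dCoord, signE, Fin.sum_univ_four] <;> ring

lemma signE_mul_dCoord (α : Fin 4 → ℝ) (μ : Fin 4) (i : Fin 3) :
    signE μ i * dCoord α i = ∑ ν, α ν * (signE μ i * signE ν i) := by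
  simp only [dCoord_eq_sum, Finset.mul_sum, mul_left_comm]

lemma signE_mul_dCoord_le (α : Fin 4 → ℝ) (μ : Fin 4) (i : Fin 3) :
    signE μ i * dCoord α i ≤ |dCoord α i| := by
  simpa only [abs_mul, abs_signE, one_mul] using le_abs_self (signE μ i * dCoord α i)

variable {α : Fin 4 → ℝ}

lemma sum_signE_mul_dCoord (hα : ∑ μ, α μ = 1) (μ : Fin 4) :
    ∑ i, signE μ i * dCoord α i = 4 * α μ - 1 := by
  calc ∑ i, signE μ i * dCoord α i = ∑ ν, α ν * ∑ i, signE μ i * signE ν i := by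
        simp only [signE_mul_dCoord, Finset.mul_sum]
        exact Finset.sum_comm
    _ = ∑ ν, (4 * (if μ = ν then α ν else 0) - α ν) := by
        refine Finset.sum_congr rfl fun ν _ => ?_
        rw [sum_signE_mul_signE]
        split_ifs <;> ring
    _ = 4 * α μ - 1 := by
        rw [Finset.sum_sub_distrib, ← Finset.mul_sum, Finset.sum_ite_eq,
          if_pos (Finset.mem_univ μ), hα]

lemma le_half_of_sum_abs_dCoord_le_one (hα : ∑ μ, α μ = 1) (hO : ∑ i, |dCoord α i| ≤ 1)
    (μ : Fin 4) : α μ ≤ 1 / 2 := by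
  have hle := Finset.sum_le_sum fun i (_ : i ∈ Finset.univ) => signE_mul_dCoord_le α μ i
  rw [sum_signE_mul_dCoord hα] at hle
  linarith

lemma two_mul_sub_one_le_signE_mul_dCoord (hα : α ∈ stdSimplex ℝ (Fin 4)) (μ : Fin 4)
    (i : Fin 3) : 2 * α μ - 1 ≤ signE μ i * dCoord α i := by
  calc 2 * α μ - 1 = ∑ ν, (2 * (if μ = ν then α ν else 0) - α ν) := by
        rw [Finset.sum_sub_distrib, ← Finset.mul_sum, Finset.sum_ite_eq,
          if_pos (Finset.mem_univ μ), hα.2]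
    _ ≤ ∑ ν, α ν * (signE μ i * signE ν i) := by
        refine Finset.sum_le_sum fun ν _ => ?_
        have hsign : -1 ≤ signE μ i * signE ν i := by
          refine (abs_le.mp (le_of_eq ?_)).1
          rw [abs_mul, abs_signE, abs_signE, one_mul]
        split_ifs with hν
        · subst hν
          rw [← abs_mul_abs_self, abs_signE]
          linarith
        · nlinarith [hα.1 ν]
    _ = signE μ i * dCoord α i := (signE_mul_dCoord α μ i).symm

lemma sum_abs_dCoord_of_half_le (hα : α ∈ stdSimplex ℝ (Fin 4)) {μ : Fin 4} (hμ : 1 / 2 ≤ α μ) :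
    ∑ i, |dCoord α i| = 4 * α μ - 1 := by
  rw [← sum_signE_mul_dCoord hα.2 μ]
  refine Finset.sum_congr rfl fun i _ => ?_
  have hnonneg : 0 ≤ signE μ i * dCoord α i := by
    linarith [two_mul_sub_one_le_signE_mul_dCoord hα μ i]
  rw [← abs_of_nonneg hnonneg, abs_mul, abs_signE, one_mul]

end PauliCoordinates

section PauliChannel

lemma isHermitian_pauli (μ : Fin 4) : (pauli μ).IsHermitian := by
  ext i j
  fin_cases μ <;> fin_cases i <;> fin_cases j <;> simp [pauli]

lemma pauli_mul_self (μ : Fin 4) : pauli μ * pauli μ = 1 := by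
  ext i j
  fin_cases μ <;> fin_cases i <;> fin_cases j <;>
    simp [pauli, mul_apply, Fin.sum_univ_two]

lemma pauli_mem_unitaryGroup (μ : Fin 4) : pauli μ ∈ unitaryGroup (Fin 2) ℂ := by
  rw [mem_unitaryGroup_iff, star_eq_conjTranspose, (isHermitian_pauli μ).eq, pauli_mul_self]

lemma trace_pauli_mul_pauli (μ ν : Fin 4) :
    (pauli μ * pauli ν).trace = if μ = ν then 2 else 0 := by
  fin_cases μ <;> fin_cases ν <;> simp [pauli, trace_fin_two] <;> norm_num

lemma isTP_pauliChannel {α : Fin 4 → ℝ} (hα : ∑ μ, α μ = 1) : IsTP (pauliChannel α) := by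
  intro X
  simp only [pauliChannel, LinearMap.sum_apply, LinearMap.smul_apply, trace_sum, trace_smul,
    isTP_conjBy (pauli_mem_unitaryGroup _) X, ← Finset.sum_smul]
  rw [← Complex.ofReal_sum, hα, Complex.ofReal_one, one_smul]

lemma avgFid_eq_protocolTrace (N : Superoperator 2) {m : ℕ} (I C : Fin m → Superoperator 2) :
    avgFid N I C = (2 + (protocolTrace I C N).re) / 6 := by
  rw [avgFid, protocolTrace_apply, Complex.re_sum]

lemma avgFid_pauliChannel (α : Fin 4 → ℝ) {m : ℕ} (I C : Fin m → Superoperator 2) :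
    avgFid (pauliChannel α) I C =
      (2 + ∑ μ, α μ * (protocolTrace I C (conjBy (pauli μ))).re) / 6 := by
  simp only [avgFid_eq_protocolTrace, pauliChannel, map_sum, map_smul, smul_eq_mul,
    Complex.re_sum, Complex.re_ofReal_mul]

lemma avgFid_pauliChannel_id_conjBy (α : Fin 4 → ℝ) (μ : Fin 4) :
    avgFid (pauliChannel α) (fun _ : Fin 1 => LinearMap.id) (fun _ => conjBy (pauli μ)) =
      (1 + 2 * α μ) / 3 := by
  have htrace : ∀ ν, (protocolTrace (fun _ : Fin 1 => LinearMap.id)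
      (fun _ => conjBy (pauli μ)) (conjBy (pauli ν))).re = if μ = ν then 4 else 0 := by
    intro ν
    simp only [protocolTrace_apply, Finset.univ_unique, Finset.sum_singleton, LinearMap.comp_id,
      ← conjBy_mul, trace_conjBy, trace_pauli_mul_pauli]
    split_ifs <;> norm_num
  simp only [avgFid_pauliChannel, htrace, mul_ite, mul_zero, Finset.sum_ite_eq, Finset.mem_univ,
    if_true]
  ring

lemma avgFid_drInstr_drCorr {N : Superoperator 2} (hN : IsTP N) :
    avgFid N drInstr drCorr = 2 / 3 := by
  have htrace : ∀ ω, LinearMap.trace ℂ _ (drCorr ω ∘ₗ N ∘ₗ drInstr ω) = 1 := by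
    intro ω
    have hrank : LinearMap.trace ℂ _ (drCorr ω ∘ₗ N ∘ₗ drInstr ω) = (N (drInstr ω (Pk ω))).trace :=
      LinearMap.trace_smulRight (traceLinearMap (Fin 2) ℂ ℂ ∘ₗ N ∘ₗ drInstr ω) (Pk ω)
    rw [hrank, hN]
    fin_cases ω <;> simp [drInstr, Pk, trace_fin_two]
  rw [avgFid_eq_protocolTrace, protocolTrace_apply]
  simp only [htrace]
  norm_num

variable {α : Fin 4 → ℝ} {m : ℕ} {I C : Fin m → Superoperator 2}

lemma IsProtocol.re_protocolTrace_pauli_nonneg (h : IsProtocol I C) (μ : Fin 4) :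
    0 ≤ (protocolTrace I C (conjBy (pauli μ))).re :=
  (Complex.le_def.mp (h.protocolTrace_nonneg (isCP_conjBy (pauli μ)))).1

lemma IsProtocol.re_protocolTrace_pauli_add_le (h : IsProtocol I C) {μ ν : Fin 4} (hνμ : ν ≠ μ) :
    (protocolTrace I C (conjBy (pauli μ))).re +
      (protocolTrace I C (conjBy (pauli ν))).re ≤ 4 := by
  have horth : ((pauli μ)ᴴ * pauli ν).trace = 0 := by
    rw [(isHermitian_pauli μ).eq, trace_pauli_mul_pauli, if_neg hνμ.symm]
  have hle := (Complex.le_def.mp (h.protocolTrace_conjBy_add_le (pauli_mem_unitaryGroup μ)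
    (pauli_mem_unitaryGroup ν) horth)).1
  rwa [Complex.add_re, Complex.re_ofNat] at hle

lemma IsProtocol.avgFid_pauliChannel_le_of_half_le (h : IsProtocol I C)
    (hα : α ∈ stdSimplex ℝ (Fin 4)) {μ : Fin 4} (hμ : 1 / 2 ≤ α μ) :
    avgFid (pauliChannel α) I C ≤ (1 + 2 * α μ) / 3 := by
  obtain ⟨ν, hν⟩ := exists_ne μ
  have hμ_le : (protocolTrace I C (conjBy (pauli μ))).re ≤ 4 := by
    linarith [h.re_protocolTrace_pauli_add_le hν, h.re_protocolTrace_pauli_nonneg ν]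
  have hle := sum_mul_le_of_half_le (t := fun ν => (protocolTrace I C (conjBy (pauli ν))).re) hα
    hμ hμ_le fun _ => h.re_protocolTrace_pauli_add_le
  rw [avgFid_pauliChannel]
  linarith

lemma IsProtocol.avgFid_pauliChannel_le_of_le_half (h : IsProtocol I C)
    (hα : α ∈ stdSimplex ℝ (Fin 4)) (hα_half : ∀ μ, α μ ≤ 1 / 2) :
    avgFid (pauliChannel α) I C ≤ 2 / 3 := by
  have hle := sum_mul_le_of_le_half (t := fun μ => (protocolTrace I C (conjBy (pauli μ))).re) hα
    hα_half fun _ _ => h.re_protocolTrace_pauli_add_le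
  rw [avgFid_pauliChannel]
  linarith

end PauliChannel

/-- optimal protocols against a unital (Pauli) qubit channel `N`
    with coordinates `d = (d¹,d²,d³)`.
    (i) If `d` lies in the corner tetrahedron `T_μ` (i.e. `⟨s_μ, d⟩ ≥ 1`), the
    no-measurement protocol with correction `A_{σ_μ}` achieves average fidelity
    `1/2 + (|d¹|+|d²|+|d³|)/6`, optimally among all ex-ante/ex-post protocols.
    (ii) If `d` lies in the octahedron `O` (i.e. `|d¹|+|d²|+|d³| ≤ 1`), every
    protocol has average fidelity at most `2/3`, and the
    discriminate-and-reprepare protocol attains `2/3`. -/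
theorem stmt19 (α : Fin 4 → ℝ) (hα0 : ∀ μ, 0 ≤ α μ) (hα1 : ∑ μ, α μ = 1) :
    (∀ μ : Fin 4, 1 ≤ ∑ i, signE μ i * dCoord α i →
      (avgFid (pauliChannel α)
          (fun _ : Fin 1 => LinearMap.id) (fun _ => conjBy (pauli μ))
        = 1 / 2 + (∑ i, |dCoord α i|) / 6) ∧
      (∀ (m : ℕ)
          (I C : Fin m → (Matrix (Fin 2) (Fin 2) ℂ →ₗ[ℂ] Matrix (Fin 2) (Fin 2) ℂ)),
        IsProtocol I C →
          avgFid (pauliChannel α) I C ≤ 1 / 2 + (∑ i, |dCoord α i|) / 6)) ∧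
    ((∑ i, |dCoord α i|) ≤ 1 →
      (∀ (m : ℕ)
          (I C : Fin m → (Matrix (Fin 2) (Fin 2) ℂ →ₗ[ℂ] Matrix (Fin 2) (Fin 2) ℂ)),
        IsProtocol I C → avgFid (pauliChannel α) I C ≤ 2 / 3) ∧
      avgFid (pauliChannel α) drInstr drCorr = 2 / 3) := by
  have hα : α ∈ stdSimplex ℝ (Fin 4) := ⟨hα0, hα1⟩
  refine ⟨fun μ hμ => ?_, fun hO => ⟨fun m I C h => ?_, ?_⟩⟩
  · have hhalf : 1 / 2 ≤ α μ := by linarith [sum_signE_mul_dCoord hα1 μ]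
    have hvalue : 1 / 2 + (∑ i, |dCoord α i|) / 6 = (1 + 2 * α μ) / 3 := by
      rw [sum_abs_dCoord_of_half_le hα hhalf]
      ring
    rw [hvalue]
    exact ⟨avgFid_pauliChannel_id_conjBy α μ,
      fun m I C h => h.avgFid_pauliChannel_le_of_half_le hα hhalf⟩
  · exact h.avgFid_pauliChannel_le_of_le_half hα (le_half_of_sum_abs_dCoord_le_one hα1 hO)
  · exact avgFid_drInstr_drCorr (isTP_pauliChannel hα1)
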